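/- Let Φ = Φ_{0.99,5}, i.e., λ = 0.99 and μ = 5. There exist a natural number N and a nonempty compact set Λ ⊆ ℝ², invariant under H := Φ^(N+2) (the (N+2)-fold iterate of Φ), together with a homeomorphism e from Λ onto the space {0,1}^ℤ of doubly-infinite binary sequences (with the product topology) such that e ∘ (H restricted to Λ) = σ ∘ e, where σ : {0,1}^ℤ → {0,1}^ℤ is the shift map (σ(s))_n = s_{n+1}. Consequently, H restricted to Λ has a dense orbit and Φ has periodic points of arbitrarily large minimal period: for every m ∈ ℕ there exists a point p ∈ ℝ² and k ≥ m with Φ^k(p) = p and Φ^j(p) ≠ p for 0 < j < k. -/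

import Mathlib

noncomputable section

/-- The planar R-S flip-flop model map `Φ_{λ,μ}(x,y) = (1 − x(λ(1−x) + y), μy(x − y))`. -/
def Phi (l m : ℝ) (p : ℝ × ℝ) : ℝ × ℝ :=
  (1 - p.1 * (l * (1 - p.1) + p.2), m * p.2 * (p.1 - p.2))

/-- The shift map on the space {0,1}^ℤ of doubly-infinite binary sequences. -/
def shiftMap (s : ℤ → Bool) : ℤ → Bool := fun n => s (n + 1)

/-!
Two pseudo-orbit segments of `Φ = Φ_{0.99,5}` of length five, one for each symbol, can be followed
in any order. Around their points lie thin parallelograms, each stretched by `Φ` across the next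
one; in affine coordinates the transition maps are quadratic with rational coefficients, so this
is a finite check in exact arithmetic. The orbits following a given itinerary are the fixed points
of an operator on bounded bi-infinite sequences which updates the stable coordinate by the map and
the unstable one by a quasi-Newton step. That operator is a contraction, hence every itinerary is
followed by exactly one orbit. By compactness and uniqueness this orbit depends continuously on
the itinerary. Conversely it determines the itinerary: `Φ^5` is injective on the relevant points,
because a quadratic map is injective on a convex set where its Jacobian does not vanish, and the
third parallelograms of the two segments are disjoint.
-/

open Set Function Metric Topology Filter
open scoped NNReal

namespace FlipFlop

section Orbits

variable {X Y : Type*}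

/-- A full orbit `x` of the nonautonomous system `xₙ₊₁ = fₙ(xₙ)` whose `n`-th point lies in the
prescribed set `Nₙ`. -/
structure IsOrbitIn (f : ℤ → X → X) (N : ℤ → Set X) (x : ℤ → X) : Prop where
  mem : ∀ n, x n ∈ N n
  map_eq : ∀ n, f n (x n) = x (n + 1)

theorem IsOrbitIn.iterate_eq {f : X → X} {N : ℤ → Set X} {x : ℤ → X}
    (hx : IsOrbitIn (fun _ ↦ f) N x) (n : ℤ) (k : ℕ) : f^[k] (x n) = x (n + k) := by
  induction k with
  | zero => simp
  | succ k ih => rw [iterate_succ_apply', ih, hx.map_eq, Nat.cast_succ, add_assoc]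

theorem existsUnique_isOrbitIn_image {f : X → X} {g : ℤ → Y → Y} {φ : ℤ → Y → X} {B : Set Y}
    (hφ : ∀ n, Injective (φ n)) (hfg : ∀ n y, φ (n + 1) (g n y) = f (φ n y))
    (h : ∃! y, IsOrbitIn g (fun _ ↦ B) y) :
    ∃! x, IsOrbitIn (fun _ ↦ f) (fun n ↦ φ n '' B) x := by
  obtain ⟨y, hy, hy_unique⟩ := h
  refine ⟨fun n ↦ φ n (y n), ⟨fun n ↦ mem_image_of_mem _ (hy.mem n), fun n ↦ ?_⟩, fun x hx ↦ ?_⟩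
  · rw [← hfg, hy.map_eq]
  · choose z hzB hzx using hx.mem
    have hz : IsOrbitIn g (fun _ ↦ B) z :=
      ⟨hzB, fun n ↦ hφ (n + 1) (by rw [hfg, hzx, hzx, hx.map_eq])⟩
    funext n
    rw [← hzx, hy_unique z hz]

theorem mul_add_ediv_emod {k r : ℕ} (hr : r < k) (q : ℤ) :
    (k * q + r) / k = q ∧ (k * q + r) % k = (r : ℤ) :=
  (Int.ediv_emod_unique (by lia)).2 ⟨by ring, by positivity, by exact_mod_cast hr⟩

theorem IsOrbitIn.interpolate {k : ℕ} (hk : 0 < k) {f : X → X} {M : ℤ → ℕ → Set X} {y : ℤ → X}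
    (hy : IsOrbitIn (fun _ ↦ f^[k]) (fun q ↦ {x | ∀ r < k, f^[r] x ∈ M q r}) y) :
    IsOrbitIn (fun _ ↦ f) (fun n ↦ M (n / k) (n % k).toNat)
      (fun n ↦ f^[(n % k).toNat] (y (n / k))) := by
  have hlt (n : ℤ) : (n % k).toNat < k := by
    have := Int.emod_lt_of_pos n (Nat.cast_pos.2 hk)
    omega
  refine ⟨fun n ↦ hy.mem _ _ (hlt n), fun n ↦ ?_⟩
  obtain ⟨q, r, hr, rfl⟩ : ∃ (q : ℤ) (r : ℕ), r < k ∧ n = k * q + r := by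
    refine ⟨n / k, (n % k).toNat, hlt n, ?_⟩
    rw [Int.toNat_of_nonneg (Int.emod_nonneg _ (by positivity)), Int.mul_ediv_add_emod]
  rw [(mul_add_ediv_emod hr q).1, (mul_add_ediv_emod hr q).2, Int.toNat_natCast,
    ← iterate_succ_apply' f]
  rcases (Nat.succ_le_of_lt hr).lt_or_eq with hr' | hr'
  · have h := mul_add_ediv_emod hr' q
    rw [Nat.cast_succ, ← add_assoc] at h
    rw [h.1, h.2, ← Nat.cast_succ, Int.toNat_natCast]
  · have h := mul_add_ediv_emod hk (q + 1)
    have h_eq : (k : ℤ) * (q + 1) + (0 : ℕ) = k * q + r + 1 := by grind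
    rw [h_eq] at h
    rw [h.1, h.2, Int.toNat_natCast, hr', hy.map_eq, iterate_zero_apply]

theorem existsUnique_isOrbitIn_iterate {k : ℕ} (hk : 0 < k) {f : X → X} {M : ℤ → ℕ → Set X}
    (h : ∃! x, IsOrbitIn (fun _ ↦ f) (fun n ↦ M (n / k) (n % k).toNat) x) :
    ∃! y, IsOrbitIn (fun _ ↦ f^[k]) (fun q ↦ {x | ∀ r < k, f^[r] x ∈ M q r}) y := by
  obtain ⟨x, hx, hx_unique⟩ := h
  refine ⟨fun q ↦ x (k * q), ⟨fun q r hr ↦ ?_, fun q ↦ ?_⟩, fun y hy ↦ funext fun q ↦ ?_⟩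
  · have hmem := hx.mem (k * q + r)
    rwa [(mul_add_ediv_emod hr q).1, (mul_add_ediv_emod hr q).2, Int.toNat_natCast,
      ← hx.iterate_eq] at hmem
  · rw [hx.iterate_eq, mul_add, mul_one]
  · have hk' : (k : ℤ) ≠ 0 := by positivity
    rw [← hx_unique _ (hy.interpolate hk)]
    simp [Int.mul_ediv_cancel_left _ hk']

theorem injOn_iterate {f : X → X} {N : ℕ → Set X} {k : ℕ}
    (h : ∀ r < k, InjOn f (N r)) : InjOn f^[k] {x | ∀ r < k, f^[r] x ∈ N r} := by
  induction k with
  | zero => exact injective_id.injOn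
  | succ k ih =>
    intro x hx y hy hxy
    rw [iterate_succ_apply', iterate_succ_apply'] at hxy
    exact ih (fun r hr ↦ h r (by lia)) (fun r hr ↦ hx r (by lia)) (fun r hr ↦ hy r (by lia))
      (h k k.lt_succ_self (hx k k.lt_succ_self) (hy k k.lt_succ_self) hxy)

end Orbits

section Shadowing

theorem existsUnique_fixedPoint_of_dist_apply_le {J X : Type*} [MetricSpace X] {B : Set X}
    (hB_complete : IsComplete B) (hB_bounded : Bornology.IsBounded B) (hB_nonempty : B.Nonempty)
    {κ : ℝ≥0} (hκ : κ < 1) {T : (J → X) → J → X}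
    (hT_mem : ∀ w, (∀ j, w j ∈ B) → ∀ j, T w j ∈ B)
    (hT_dist : ∀ w z d, (∀ j, w j ∈ B) → (∀ j, z j ∈ B) → (∀ j, dist (w j) (z j) ≤ d) →
      ∀ j, dist (T w j) (T z j) ≤ κ * d) :
    ∃! w, (∀ j, w j ∈ B) ∧ T w = w := by
  let : TopologicalSpace J := ⊥
  have : DiscreteTopology J := ⟨rfl⟩
  have := hB_complete.completeSpace_coe
  have := hB_nonempty.to_subtype
  let bdd (w : J → B) : BoundedContinuousFunction J B :=
    .mkOfDiscrete w (diam B) fun i j ↦ dist_le_diam_of_mem hB_bounded (w i).2 (w j).2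
  have : Nonempty (BoundedContinuousFunction J B) := ⟨bdd fun _ ↦ Classical.arbitrary B⟩
  let S (w : BoundedContinuousFunction J B) : BoundedContinuousFunction J B :=
    bdd fun j ↦ ⟨T (fun i ↦ w i) j, hT_mem _ (fun i ↦ (w i).2) j⟩
  have hS : ContractingWith κ S := ⟨hκ, LipschitzWith.of_dist_le_mul fun w z ↦
    (BoundedContinuousFunction.dist_le (by positivity)).2 <|
      hT_dist _ _ _ (fun i ↦ (w i).2) (fun i ↦ (z i).2) w.dist_coe_le_dist⟩
  refine ⟨fun j ↦ hS.fixedPoint S j, ⟨fun j ↦ (hS.fixedPoint S j).2, funext fun j ↦ ?_⟩, ?_⟩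
  · exact congrArg (fun w : BoundedContinuousFunction J B ↦ (w j : X)) hS.fixedPoint_isFixedPt
  · rintro z ⟨hzB, hz⟩
    have hz_fixed : IsFixedPt S (bdd fun j ↦ ⟨z j, hzB j⟩) :=
      BoundedContinuousFunction.ext fun j ↦ Subtype.ext (congrFun hz j)
    rw [← hS.fixedPoint_unique hz_fixed]
    rfl

variable {E F : Type*} [NormedAddCommGroup E] [NormedAddCommGroup F]

/-- `f` stretches the unit ball of `E × F` across itself along `E` and contracts it along `F`, and
`S` is an approximate inverse of the derivative of `f` along `E`: the quasi-Newton step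
`w ↦ w.1 - S ((f w).1 - u)` for solving `(f w).1 = u` stays in the unit ball and contracts by
`κ`. -/
structure CrossesUnitBall (κ : ℝ≥0) (S : E →+ E) (f : E × F → E × F) : Prop where
  injective : Injective S
  norm_newton_le : ∀ w u, ‖w‖ ≤ 1 → ‖u‖ ≤ 1 → ‖w.1 - S ((f w).1 - u)‖ ≤ 1
  dist_newton_le : ∀ w z u v d, ‖w‖ ≤ 1 → ‖z‖ ≤ 1 → dist w z ≤ d → dist u v ≤ d →
    dist (w.1 - S ((f w).1 - u)) (z.1 - S ((f z).1 - v)) ≤ κ * d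
  norm_snd_le : ∀ w, ‖w‖ ≤ 1 → ‖(f w).2‖ ≤ 1
  dist_snd_le : ∀ w z, ‖w‖ ≤ 1 → ‖z‖ ≤ 1 → dist (f w).2 (f z).2 ≤ κ * dist w z

theorem existsUnique_isOrbitIn_closedBall [CompleteSpace E] [CompleteSpace F] {κ : ℝ≥0}
    (hκ : κ < 1) {S : ℤ → E →+ E} {f : ℤ → E × F → E × F}
    (h : ∀ n, CrossesUnitBall κ (S n) (f n)) :
    ∃! w, IsOrbitIn f (fun _ ↦ closedBall 0 1) w := by
  let T (w : ℤ → E × F) (n : ℤ) : E × F :=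
    ((w n).1 - S n ((f n (w n)).1 - (w (n + 1)).1), (f (n - 1) (w (n - 1))).2)
  have orbit_iff (w : ℤ → E × F) : IsOrbitIn f (fun _ ↦ closedBall 0 1) w ↔
      (∀ n, w n ∈ closedBall 0 1) ∧ T w = w := by
    refine ⟨fun hw ↦ ⟨hw.mem, funext fun n ↦ Prod.ext ?_ ?_⟩, fun ⟨hwB, hw⟩ ↦ ⟨hwB, fun n ↦ ?_⟩⟩
    · simp [T, hw.map_eq]
    · simp [T, hw.map_eq]
    · ext
      · have := congrArg Prod.fst (congrFun hw n)
        rw [sub_eq_self, map_eq_zero_iff _ (h n).injective, sub_eq_zero] at this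
        exact this
      · simpa [T] using congrArg Prod.snd (congrFun hw (n + 1))
  simp only [orbit_iff]
  refine existsUnique_fixedPoint_of_dist_apply_le isClosed_closedBall.isComplete
    isBounded_closedBall (nonempty_closedBall.2 zero_le_one) hκ ?_ ?_
  · intro w hw n
    simp only [mem_closedBall_zero_iff] at hw ⊢
    exact max_le ((h n).norm_newton_le _ _ (hw n) ((norm_fst_le _).trans (hw (n + 1))))
      ((h (n - 1)).norm_snd_le _ (hw (n - 1)))
  · intro w z d hw hz hd n
    simp only [mem_closedBall_zero_iff] at hw hz
    refine max_le ((h n).dist_newton_le _ _ _ _ _ (hw n) (hz n) (hd n) ?_) ?_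
    · exact (le_max_left _ _).trans (hd (n + 1))
    · exact ((h (n - 1)).dist_snd_le _ _ (hw _) (hz _)).trans (by gcongr; exact hd _)

end Shadowing

section Horseshoe

variable {A X : Type*} [TopologicalSpace X]

/-- A compact set `⋃ a, K a` on which `H` is injective and all of whose symbolic itineraries
`s : ℤ → A` are realised by exactly one full orbit. -/
structure IsHorseshoe (H : X → X) (K : A → Set X) : Prop where
  isCompact : ∀ a, IsCompact (K a)
  pairwise_disjoint : Pairwise (Disjoint on K)
  injOn : InjOn H (⋃ a, K a)
  existsUnique_isOrbitIn : ∀ s : ℤ → A, ∃! x, IsOrbitIn (fun _ ↦ H) (fun n ↦ K (s n)) x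

namespace IsHorseshoe

variable {H : X → X} {K : A → Set X}

/-- The full orbit with itinerary `s`. -/
def orbit (h : IsHorseshoe H K) (s : ℤ → A) : ℤ → X :=
  (h.existsUnique_isOrbitIn s).choose

/-- The point whose full orbit has itinerary `s`, with `s 0` as its present symbol. -/
def code (h : IsHorseshoe H K) (s : ℤ → A) : X :=
  h.orbit s 0

theorem isOrbitIn_orbit (h : IsHorseshoe H K) (s : ℤ → A) :
    IsOrbitIn (fun _ ↦ H) (fun n ↦ K (s n)) (h.orbit s) :=
  (h.existsUnique_isOrbitIn s).choose_spec.1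

theorem eq_orbit (h : IsHorseshoe H K) {s : ℤ → A} {x : ℤ → X}
    (hx : IsOrbitIn (fun _ ↦ H) (fun n ↦ K (s n)) x) : x = h.orbit s :=
  (h.existsUnique_isOrbitIn s).choose_spec.2 x hx

theorem semiconj_code (h : IsHorseshoe H K) :
    Semiconj h.code (fun s n ↦ s (n + 1)) H := by
  intro s
  have hs := h.isOrbitIn_orbit s
  have h_shift : (fun n ↦ h.orbit s (n + 1)) = h.orbit fun n ↦ s (n + 1) :=
    h.eq_orbit ⟨fun n ↦ hs.mem (n + 1), fun n ↦ hs.map_eq (n + 1)⟩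
  rw [code, ← h_shift, code, hs.map_eq]

theorem injective_code (h : IsHorseshoe H K) : Injective h.code := by
  intro s t hst
  have hs := h.isOrbitIn_orbit s
  have ht := h.isOrbitIn_orbit t
  have orbit_eq (n : ℤ) : h.orbit s n = h.orbit t n := by
    induction n with
    | zero => exact hst
    | succ n ih => rw [← hs.map_eq, ← ht.map_eq, ih]
    | pred n ih =>
      refine h.injOn (mem_iUnion_of_mem _ (hs.mem _)) (mem_iUnion_of_mem _ (ht.mem _)) ?_
      rw [hs.map_eq, ht.map_eq, sub_add_cancel, ih]
  funext n
  by_contra hne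
  exact (h.pairwise_disjoint hne).ne_of_mem (hs.mem n) (ht.mem n) (orbit_eq n)

theorem continuous_orbit [Finite A] [TopologicalSpace A] [DiscreteTopology A] [T2Space X]
    (h : IsHorseshoe H K) (hH : Continuous H) : Continuous h.orbit := by
  have hC : IsCompact (univ.pi fun _ : ℤ ↦ ⋃ a, K a) :=
    isCompact_univ_pi fun _ ↦ isCompact_iUnion h.isCompact
  refine continuous_iff_continuousAt.2 fun s ↦ hC.tendsto_nhds_of_unique_mapClusterPt
    (.of_forall fun t n _ ↦ mem_iUnion_of_mem _ ((h.isOrbitIn_orbit t).mem n)) fun x _ hx ↦ ?_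
  refine h.eq_orbit ⟨fun n ↦ ?_, fun n ↦ ?_⟩
  · have h_symbol : ∀ᶠ t in 𝓝 s, t n = s n :=
      (continuous_apply n).continuousAt.eventually_mem ((isOpen_discrete {s n}).mem_nhds rfl)
    have h_closed : IsClosed {y : ℤ → X | y n ∈ K (s n)} :=
      (h.isCompact (s n)).isClosed.preimage (continuous_apply n)
    refine h_closed.mem_of_mapClusterPt hx (h_symbol.mono fun t ht ↦ ?_)
    rw [← ht]
    exact (h.isOrbitIn_orbit t).mem n
  · have h_closed : IsClosed {y : ℤ → X | H (y n) = y (n + 1)} :=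
      isClosed_eq (by fun_prop) (by fun_prop)
    exact h_closed.mem_of_mapClusterPt hx (.of_forall fun t ↦ (h.isOrbitIn_orbit t).map_eq n)

theorem continuous_code [Finite A] [TopologicalSpace A] [DiscreteTopology A] [T2Space X]
    (h : IsHorseshoe H K) (hH : Continuous H) : Continuous h.code :=
  (continuous_apply 0).comp (h.continuous_orbit hH)

end IsHorseshoe
end Horseshoe

section Shift

theorem exists_denseRange_shift (A : Type*) [TopologicalSpace A]
    [TopologicalSpace.SeparableSpace A] [Nonempty A] :
    ∃ u : ℤ → A, DenseRange fun (k : ℕ) (n : ℤ) ↦ u (n + k) := by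
  let d := TopologicalSpace.denseSeq (ℤ → A)
  -- The block of `u` on `[k², (k + 1)²)` with `k = Nat.pair j r` spells `d j` on `[-r, r]`.
  let u (n : ℤ) : A :=
    let k := n.toNat.sqrt
    d k.unpair.1 (n - k * k - k.unpair.2)
  have u_block (j r : ℕ) (n : ℤ) (hn : |n| ≤ r) :
      u (n + (Nat.pair j r * Nat.pair j r + r : ℕ)) = d j n := by
    obtain ⟨h_neg, h_pos⟩ := abs_le.1 hn
    have hr : r ≤ Nat.pair j r := Nat.right_le_pair j r
    have h_toNat : (n + (Nat.pair j r * Nat.pair j r + r : ℕ)).toNat =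
        Nat.pair j r * Nat.pair j r + (n + r).toNat := by
      push_cast
      lia
    have h_sqrt : (n + (Nat.pair j r * Nat.pair j r + r : ℕ)).toNat.sqrt = Nat.pair j r := by
      rw [h_toNat, Nat.sqrt_add_eq _ (by lia)]
    simp only [u, h_sqrt, Nat.unpair_pair]
    push_cast
    ring_nf
  refine ⟨u, dense_iff_closure_eq.2 <| univ_subset_iff.1 ?_⟩
  rw [← (TopologicalSpace.denseRange_denseSeq (ℤ → A)).closure_range]
  refine closure_minimal (range_subset_iff.2 fun j ↦ ?_) isClosed_closure
  have h_tendsto : Tendsto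
      (fun (r : ℕ) (n : ℤ) ↦ u (n + (Nat.pair j r * Nat.pair j r + r : ℕ))) atTop (𝓝 (d j)) := by
    refine tendsto_pi_nhds.2 fun n ↦ tendsto_nhds_of_eventually_eq ?_
    filter_upwards [eventually_ge_atTop n.natAbs] with r hr
    exact u_block j r n (by rw [Int.abs_eq_natAbs]; exact_mod_cast hr)
  exact mem_closure_of_tendsto h_tendsto (.of_forall fun _ ↦ mem_range_self _)

theorem shiftMap_iterate (k : ℕ) (s : ℤ → Bool) : shiftMap^[k] s = fun n ↦ s (n + k) := by
  induction k with
  | zero => simp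
  | succ k ih =>
    rw [iterate_succ_apply', ih]
    funext n
    simp only [shiftMap, Nat.cast_succ, add_assoc, add_comm (1 : ℤ)]

theorem surjective_shiftMap : Surjective shiftMap :=
  fun s ↦ ⟨fun n ↦ s (n - 1), by ext; simp [shiftMap]⟩

theorem minimalPeriod_shiftMap_decide_dvd (m : ℕ) :
    minimalPeriod shiftMap (fun n ↦ decide ((m : ℤ) ∣ n)) = m := by
  refine Eq.symm <| Nat.dvd_right_iff_eq.1 fun k ↦ ?_
  rw [← isPeriodicPt_iff_minimalPeriod_dvd, IsPeriodicPt, IsFixedPt, shiftMap_iterate, funext_iff]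
  simp only [decide_eq_decide]
  refine ⟨fun hk n ↦ dvd_add_left (Int.natCast_dvd_natCast.2 hk), fun h ↦ ?_⟩
  simpa [Int.natCast_dvd_natCast] using h 0

theorem minimalPeriod_eq_of_semiconj {X Y : Type*} {φ : Y → X} {g : Y → Y} {f : X → X}
    (hφ : Injective φ) (h : Semiconj φ g f) (y : Y) :
    minimalPeriod f (φ y) = minimalPeriod g y :=
  minimalPeriod_eq_minimalPeriod_iff.2 fun n ↦ by
    rw [IsPeriodicPt, IsFixedPt, ← h.iterate_right n y, hφ.eq_iff, IsPeriodicPt, IsFixedPt]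

theorem minimalPeriod_iterate_le {X : Type*} (f : X → X) (x : X) {k : ℕ} (hk : k ≠ 0) :
    minimalPeriod f^[k] x ≤ minimalPeriod f x := by
  rw [minimalPeriod_iterate_eq_div_gcd hk]
  exact Nat.div_le_self _ _

theorem exists_le_minimalPeriod_of_semiconj_shiftMap {X : Type*} {φ : (ℤ → Bool) → X} {f : X → X}
    {k : ℕ} (hk : k ≠ 0) (hφ : Injective φ) (h : Semiconj φ shiftMap f^[k]) (m : ℕ) :
    ∃ x, m ≤ minimalPeriod f x := by
  refine ⟨φ fun n ↦ decide ((m : ℤ) ∣ n), ?_⟩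
  calc m = minimalPeriod f^[k] (φ fun n ↦ decide ((m : ℤ) ∣ n)) := by
        rw [minimalPeriod_eq_of_semiconj hφ h, minimalPeriod_shiftMap_decide_dvd]
    _ ≤ minimalPeriod f (φ fun n ↦ decide ((m : ℤ) ∣ n)) := minimalPeriod_iterate_le f _ hk

end Shift

section Quadratic

/-- A real polynomial of degree at most two in two variables, with rational coefficients so that
inequalities between them are decidable. -/
structure QuadPoly where
  (const x y xx xy yy : ℚ)

namespace QuadPoly

/-- The real function defined by `g`. -/
def eval (g : QuadPoly) (w : ℝ × ℝ) : ℝ :=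
  g.const + g.x * w.1 + g.y * w.2 + g.xx * w.1 ^ 2 + g.xy * (w.1 * w.2) + g.yy * w.2 ^ 2

/-- An upper bound for `|g|` on the unit square. -/
def supBound (g : QuadPoly) : ℚ :=
  |g.const| + |g.x| + |g.y| + |g.xx| + |g.xy| + |g.yy|

/-- A Lipschitz constant of `g` on the unit square for the sup distance. -/
def lipBound (g : QuadPoly) : ℚ :=
  |g.x| + |g.y| + 2 * (|g.xx| + |g.xy| + |g.yy|)

theorem supBound_nonneg (g : QuadPoly) : 0 ≤ g.supBound := by
  unfold supBound
  positivity

theorem lipBound_nonneg (g : QuadPoly) : 0 ≤ g.lipBound := by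
  unfold lipBound
  positivity

theorem abs_eval_le (g : QuadPoly) {w : ℝ × ℝ} (hw : ‖w‖ ≤ 1) : |g.eval w| ≤ g.supBound := by
  have h1 : |w.1| ≤ 1 := (norm_fst_le w).trans hw
  have h2 : |w.2| ≤ 1 := (norm_snd_le w).trans hw
  have h_mul {s t : ℝ} (hs : |s| ≤ 1) (ht : |t| ≤ 1) : |s * t| ≤ 1 := by
    rw [abs_mul]
    exact mul_le_one₀ hs (abs_nonneg t) ht
  have h_term (a : ℚ) {t : ℝ} (ht : |t| ≤ 1) : |a * t| ≤ |(a : ℝ)| := by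
    rw [abs_mul]
    exact mul_le_of_le_one_right (abs_nonneg _) ht
  simp only [eval, supBound, Rat.cast_add, Rat.cast_abs, sq]
  refine (abs_add_le _ _).trans (add_le_add ?_ (h_term _ (h_mul h2 h2)))
  refine (abs_add_le _ _).trans (add_le_add ?_ (h_term _ (h_mul h1 h2)))
  refine (abs_add_le _ _).trans (add_le_add ?_ (h_term _ (h_mul h1 h1)))
  refine (abs_add_le _ _).trans (add_le_add ?_ (h_term _ h2))
  exact (abs_add_le _ _).trans (add_le_add le_rfl (h_term _ h1))

theorem dist_eval_le (g : QuadPoly) {w z : ℝ × ℝ} (hw : ‖w‖ ≤ 1) (hz : ‖z‖ ≤ 1) :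
    dist (g.eval w) (g.eval z) ≤ g.lipBound * dist w z := by
  have hw1 : |w.1| ≤ 1 := (norm_fst_le w).trans hw
  have hw2 : |w.2| ≤ 1 := (norm_snd_le w).trans hw
  have hz1 : |z.1| ≤ 1 := (norm_fst_le z).trans hz
  have hz2 : |z.2| ≤ 1 := (norm_snd_le z).trans hz
  have h1 : |w.1 - z.1| ≤ dist w z := le_max_left _ _
  have h2 : |w.2 - z.2| ≤ dist w z := le_max_right _ _
  have h_mul {s t s' t' : ℝ} (hs : |s| ≤ 1) (ht' : |t'| ≤ 1) (hss' : |s - s'| ≤ dist w z)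
      (htt' : |t - t'| ≤ dist w z) : |s * t - s' * t'| ≤ 2 * dist w z :=
    calc |s * t - s' * t'| = |s * (t - t') + (s - s') * t'| := by ring_nf
      _ ≤ |s| * |t - t'| + |s - s'| * |t'| := by
        simpa only [abs_mul] using abs_add_le (s * (t - t')) ((s - s') * t')
      _ ≤ 1 * dist w z + dist w z * 1 := by gcongr
      _ = 2 * dist w z := by ring
  have h_term (a : ℚ) {t D : ℝ} (ht : |t| ≤ D) : |a * t| ≤ |(a : ℝ)| * D := by
    rw [abs_mul]
    exact mul_le_mul_of_nonneg_left ht (abs_nonneg _)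
  calc dist (g.eval w) (g.eval z)
      = |g.x * (w.1 - z.1) + g.y * (w.2 - z.2) + g.xx * (w.1 * w.1 - z.1 * z.1)
          + g.xy * (w.1 * w.2 - z.1 * z.2) + g.yy * (w.2 * w.2 - z.2 * z.2)| := by
        rw [Real.dist_eq, eval, eval]
        ring_nf
    _ ≤ |(g.x : ℝ)| * dist w z + |(g.y : ℝ)| * dist w z + |(g.xx : ℝ)| * (2 * dist w z)
          + |(g.xy : ℝ)| * (2 * dist w z) + |(g.yy : ℝ)| * (2 * dist w z) := by
        refine (abs_add_le _ _).trans (add_le_add ?_ (h_term _ (h_mul hw2 hz2 h2 h2)))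
        refine (abs_add_le _ _).trans (add_le_add ?_ (h_term _ (h_mul hw1 hz2 h1 h2)))
        refine (abs_add_le _ _).trans (add_le_add ?_ (h_term _ (h_mul hw1 hz1 h1 h1)))
        exact (abs_add_le _ _).trans (add_le_add (h_term _ h1) (h_term _ h2))
    _ = g.lipBound * dist w z := by
        simp only [lipBound]
        push_cast
        ring

/-- `g` without its linear term in the first variable. -/
def eraseX (g : QuadPoly) : QuadPoly := { g with x := 0 }

theorem eval_eraseX (g : QuadPoly) (w : ℝ × ℝ) : g.eraseX.eval w = g.eval w - g.x * w.1 := by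
  simp only [eval, eraseX, Rat.cast_zero]
  ring

/-- The linear combination `a g + b h + e`. -/
def linComb (a b e : ℚ) (g h : QuadPoly) : QuadPoly where
  const := a * g.const + b * h.const + e
  x := a * g.x + b * h.x
  y := a * g.y + b * h.y
  xx := a * g.xx + b * h.xx
  xy := a * g.xy + b * h.xy
  yy := a * g.yy + b * h.yy

theorem eval_linComb (a b e : ℚ) (g h : QuadPoly) (w : ℝ × ℝ) :
    (linComb a b e g h).eval w = a * g.eval w + b * h.eval w + e := by
  simp only [eval, linComb]
  push_cast
  ring

end QuadPoly

/-- A decidable sufficient condition for `w ↦ (g w, h w)` to stretch the unit ball of `ℝ × ℝ`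
across itself along the first axis and to contract it along the second one. -/
structure Stretches (κ : ℚ≥0) (g h : QuadPoly) : Prop where
  supBound_eraseX_add_one_le : g.eraseX.supBound + 1 ≤ |g.x|
  lipBound_eraseX_add_one_le : g.eraseX.lipBound + 1 ≤ κ * |g.x|
  supBound_le : h.supBound ≤ 1
  lipBound_le : h.lipBound ≤ κ

instance {κ : ℚ≥0} {g h : QuadPoly} : Decidable (Stretches κ g h) :=
  decidable_of_iff (g.eraseX.supBound + 1 ≤ |g.x| ∧ g.eraseX.lipBound + 1 ≤ κ * |g.x| ∧
    h.supBound ≤ 1 ∧ h.lipBound ≤ κ)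
    ⟨fun ⟨h₁, h₂, h₃, h₄⟩ ↦ ⟨h₁, h₂, h₃, h₄⟩, fun ⟨h₁, h₂, h₃, h₄⟩ ↦ ⟨h₁, h₂, h₃, h₄⟩⟩

theorem Stretches.crossesUnitBall {κ : ℚ≥0} {g h : QuadPoly} (hgh : Stretches κ g h) :
    CrossesUnitBall (κ : ℝ≥0) (AddMonoidHom.mulLeft (g.x : ℝ)⁻¹) fun w ↦ (g.eval w, h.eval w) := by
  have hκ : ((κ : ℝ≥0) : ℝ) = κ := rfl
  have hx_pos : 0 < |(g.x : ℝ)| := by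
    have := hgh.supBound_eraseX_add_one_le
    have := g.eraseX.supBound_nonneg
    exact_mod_cast (by linarith : 0 < |g.x|)
  have hx : (g.x : ℝ) ≠ 0 := abs_pos.1 hx_pos
  have h_newton (w : ℝ × ℝ) (u : ℝ) :
      w.1 - (g.x : ℝ)⁻¹ * (g.eval w - u) = (g.x : ℝ)⁻¹ * (u - g.eraseX.eval w) := by
    rw [g.eval_eraseX]
    field_simp
    ring
  refine ⟨mul_right_injective₀ (inv_ne_zero hx), fun w u hw hu ↦ ?_, fun w z u v d hw hz hd hu ↦ ?_,
    fun w hw ↦ ?_, fun w z hw hz ↦ ?_⟩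
  · simp only [AddMonoidHom.coe_mulLeft, h_newton, Real.norm_eq_abs, abs_mul, abs_inv]
    rw [inv_mul_le_one₀ hx_pos]
    calc |u - g.eraseX.eval w| ≤ |u| + |g.eraseX.eval w| := abs_sub _ _
      _ ≤ 1 + g.eraseX.supBound := add_le_add hu (g.eraseX.abs_eval_le hw)
      _ ≤ |(g.x : ℝ)| := by
        rw [add_comm]
        exact_mod_cast hgh.supBound_eraseX_add_one_le
  · simp only [AddMonoidHom.coe_mulLeft, h_newton, Real.dist_eq, ← mul_sub, abs_mul, abs_inv]
    rw [inv_mul_le_iff₀ hx_pos, hκ]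
    have hd0 : 0 ≤ d := dist_nonneg.trans hd
    calc |u - g.eraseX.eval w - (v - g.eraseX.eval z)|
        = |(u - v) - (g.eraseX.eval w - g.eraseX.eval z)| := by ring_nf
      _ ≤ dist u v + dist (g.eraseX.eval w) (g.eraseX.eval z) := abs_sub _ _
      _ ≤ d + g.eraseX.lipBound * d := by
        refine add_le_add hu ((g.eraseX.dist_eval_le hw hz).trans ?_)
        exact mul_le_mul_of_nonneg_left hd (Rat.cast_nonneg.2 g.eraseX.lipBound_nonneg)
      _ = (g.eraseX.lipBound + 1) * d := by ring
      _ ≤ (κ * |(g.x : ℝ)|) * d := by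
        gcongr
        exact_mod_cast hgh.lipBound_eraseX_add_one_le
      _ = |(g.x : ℝ)| * (κ * d) := by ring
  · exact (h.abs_eval_le hw).trans (by exact_mod_cast hgh.supBound_le)
  · refine (h.dist_eval_le hw hz).trans ?_
    rw [hκ]
    gcongr
    exact_mod_cast hgh.lipBound_le

end Quadratic

section Frame

/-- A parallelogram in the plane, given by its centre and the vectors from the centre to the
midpoints of two adjacent sides: along `unstable` a map is meant to expand, along `stable` to
contract. -/
structure Frame where
  (center unstable stable : ℚ × ℚ)
  det_ne_zero : unstable.1 * stable.2 - unstable.2 * stable.1 ≠ 0 := by norm_num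

/-- A planar map with quadratic components. -/
structure QuadMap where
  (fst snd : QuadPoly)

/-- The real map defined by `P`. -/
def QuadMap.eval (P : QuadMap) (w : ℝ × ℝ) : ℝ × ℝ := (P.fst.eval w, P.snd.eval w)

namespace Frame

/-- The affine parametrisation of the parallelogram by the unit square. -/
def chart (i : Frame) (w : ℝ × ℝ) : ℝ × ℝ :=
  (i.center.1 + i.unstable.1 * w.1 + i.stable.1 * w.2,
    i.center.2 + i.unstable.2 * w.1 + i.stable.2 * w.2)

/-- The closed parallelogram as a subset of the plane. -/
def region (i : Frame) : Set (ℝ × ℝ) := i.chart '' closedBall 0 1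

theorem continuous_chart (i : Frame) : Continuous i.chart := by
  unfold chart
  fun_prop

theorem isCompact_region (i : Frame) : IsCompact i.region :=
  (isCompact_closedBall 0 1).image i.continuous_chart

theorem injective_chart (i : Frame) : Injective i.chart := by
  intro w z h
  obtain ⟨h1, h2⟩ := Prod.ext_iff.1 h
  simp only [chart] at h1 h2
  have h_det : (i.unstable.1 * i.stable.2 - i.unstable.2 * i.stable.1 : ℝ) ≠ 0 := by
    exact_mod_cast i.det_ne_zero
  ext
  · exact mul_left_cancel₀ h_det (by linear_combination i.stable.2 * h1 - i.stable.1 * h2)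
  · exact mul_left_cancel₀ h_det (by linear_combination i.unstable.1 * h2 - i.unstable.2 * h1)

theorem abs_mul_add_mul_le {a b : ℝ} {w : ℝ × ℝ} (hw : w ∈ closedBall 0 1) :
    |a * w.1 + b * w.2| ≤ |a| + |b| := by
  rw [mem_closedBall_zero_iff] at hw
  refine (abs_add_le _ _).trans ?_
  rw [abs_mul, abs_mul]
  exact add_le_add (mul_le_of_le_one_right (abs_nonneg a) ((norm_fst_le w).trans hw))
    (mul_le_of_le_one_right (abs_nonneg b) ((norm_snd_le w).trans hw))

theorem abs_fst_sub_center_le (i : Frame) {p : ℝ × ℝ} (hp : p ∈ i.region) :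
    |p.1 - i.center.1| ≤ |(i.unstable.1 : ℝ)| + |(i.stable.1 : ℝ)| := by
  obtain ⟨w, hw, rfl⟩ := hp
  rw [chart, add_assoc, add_sub_cancel_left]
  exact abs_mul_add_mul_le hw

theorem abs_snd_sub_center_le (i : Frame) {p : ℝ × ℝ} (hp : p ∈ i.region) :
    |p.2 - i.center.2| ≤ |(i.unstable.2 : ℝ)| + |(i.stable.2 : ℝ)| := by
  obtain ⟨w, hw, rfl⟩ := hp
  rw [chart, add_assoc i.center.2.cast, add_sub_cancel_left]
  exact abs_mul_add_mul_le hw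

end Frame

/-- The composition of `g` with the chart of `i`, as a Taylor expansion at the centre. -/
def QuadPoly.pullback (g : QuadPoly) (i : Frame) : QuadPoly :=
  let c := i.center
  let u := i.unstable
  let s := i.stable
  let dx := g.x + 2 * g.xx * c.1 + g.xy * c.2
  let dy := g.y + g.xy * c.1 + 2 * g.yy * c.2
  { const := g.const + g.x * c.1 + g.y * c.2 + g.xx * c.1 ^ 2 + g.xy * (c.1 * c.2) + g.yy * c.2 ^ 2
    x := dx * u.1 + dy * u.2
    y := dx * s.1 + dy * s.2
    xx := g.xx * u.1 ^ 2 + g.xy * (u.1 * u.2) + g.yy * u.2 ^ 2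
    xy := 2 * g.xx * (u.1 * s.1) + g.xy * (u.1 * s.2 + u.2 * s.1) + 2 * g.yy * (u.2 * s.2)
    yy := g.xx * s.1 ^ 2 + g.xy * (s.1 * s.2) + g.yy * s.2 ^ 2 }

theorem QuadPoly.eval_pullback (g : QuadPoly) (i : Frame) (w : ℝ × ℝ) :
    (g.pullback i).eval w = g.eval (i.chart w) := by
  simp only [eval, pullback, Frame.chart]
  push_cast
  ring

namespace QuadMap

/-- The map `P` read in the charts of `i` and `j`; the coordinates of `j` are recovered as
quotients of determinants. -/
def transition (P : QuadMap) (i j : Frame) : QuadMap :=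
  let c := j.center
  let u := j.unstable
  let s := j.stable
  let d := u.1 * s.2 - u.2 * s.1
  let X := P.fst.pullback i
  let Y := P.snd.pullback i
  { fst := .linComb (s.2 / d) (-s.1 / d) ((s.1 * c.2 - s.2 * c.1) / d) X Y
    snd := .linComb (-u.2 / d) (u.1 / d) ((u.2 * c.1 - u.1 * c.2) / d) X Y }

theorem chart_transition (P : QuadMap) (i j : Frame) (w : ℝ × ℝ) :
    j.chart ((P.transition i j).eval w) = P.eval (i.chart w) := by
  obtain ⟨d, hd⟩ : ∃ d : ℝ, d = j.unstable.1 * j.stable.2 - j.unstable.2 * j.stable.1 := ⟨_, rfl⟩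
  have hd_ne : d ≠ 0 := by
    rw [hd]
    exact_mod_cast j.det_ne_zero
  simp only [Frame.chart.eq_1 j, eval, transition, QuadPoly.eval_linComb, QuadPoly.eval_pullback]
  push_cast
  rw [← hd]
  ext
  · field_simp
    rw [hd]
    ring
  · field_simp
    rw [hd]
    ring

theorem existsUnique_isOrbitIn_region {κ : ℚ≥0} (hκ : κ < 1) (P : QuadMap) (i : ℤ → Frame)
    (h : ∀ n, Stretches κ (P.transition (i n) (i (n + 1))).fst
      (P.transition (i n) (i (n + 1))).snd) :
    ∃! x, IsOrbitIn (fun _ ↦ P.eval) (fun n ↦ (i n).region) x :=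
  existsUnique_isOrbitIn_image (fun n ↦ (i n).injective_chart)
    (fun n ↦ P.chart_transition (i n) (i (n + 1)))
    (existsUnique_isOrbitIn_closedBall (mod_cast hκ) fun n ↦ (h n).crossesUnitBall)

end QuadMap

end Frame

section Map

/-- `Phi l m` for rational parameters, as a quadratic map. -/
def phiQuad (l m : ℚ) : QuadMap where
  fst := { const := 1, x := -l, y := 0, xx := l, xy := -1, yy := 0 }
  snd := { const := 0, x := 0, y := 0, xx := 0, xy := m, yy := -m }

theorem eval_phiQuad (l m : ℚ) : (phiQuad l m).eval = Phi l m := by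
  funext p
  simp only [QuadMap.eval, QuadPoly.eval, phiQuad, Phi]
  push_cast
  ext <;> ring

theorem continuous_Phi (l m : ℝ) : Continuous (Phi l m) := by
  unfold Phi
  fun_prop

/-- The Jacobian determinant of `Phi l m` at `p`. -/
def jacobian (l m : ℝ) (p : ℝ × ℝ) : ℝ :=
  m * ((2 * l * p.1 - l - p.2) * (p.1 - 2 * p.2) + p.1 * p.2)

-- As `Phi` is quadratic, `Phi p - Phi q` is the derivative at the midpoint applied to `p - q`.
theorem injOn_Phi_of_jacobian_ne_zero {l m : ℝ} {C : Set (ℝ × ℝ)} (hC : Convex ℝ C)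
    (hJ : ∀ p ∈ C, jacobian l m p ≠ 0) : InjOn (Phi l m) C := by
  intro p hp q hq h
  have h_mid : jacobian l m ((2⁻¹ : ℝ) • p + (2⁻¹ : ℝ) • q) ≠ 0 :=
    hJ _ (hC hp hq (by norm_num) (by norm_num) (by norm_num))
  obtain ⟨h1, h2⟩ := Prod.ext_iff.1 h
  simp only [Phi] at h1 h2
  simp only [jacobian, Prod.fst_add, Prod.snd_add, Prod.smul_fst, Prod.smul_snd, smul_eq_mul]
    at h_mid
  ext <;> refine mul_left_cancel₀ h_mid ?_
  · linear_combination m * ((p.1 + q.1) / 2 - (p.2 + q.2)) * h1 + (p.1 + q.1) / 2 * h2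
  · linear_combination (l * (p.1 + q.1) - l - (p.2 + q.2) / 2) * h2 - m * ((p.2 + q.2) / 2) * h1

theorem injOn_Phi_half_lt_fst {l m : ℝ} (hl : 0 < l) (hl' : l ≤ 1) (hm : 0 < m) :
    InjOn (Phi l m) (Prod.fst ⁻¹' Ioi (1 / 2)) := by
  refine injOn_Phi_of_jacobian_ne_zero
    ((convex_Ioi _).linear_preimage (LinearMap.fst ℝ ℝ ℝ)) fun p hp ↦ ?_
  have h_eq : jacobian l m p = m * (l * (2 * (p.1 - p.2 - 1 / 2) ^ 2 + (p.1 - 1 / 2))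
      + 2 * (1 - l) * p.2 ^ 2) := by
    rw [jacobian]
    ring
  have : 0 < p.1 - 1 / 2 := sub_pos.2 hp
  have : 0 ≤ 1 - l := sub_nonneg.2 hl'
  rw [h_eq]
  positivity

theorem injOn_Phi_eighth_lt_snd {l m : ℝ} (hl : 0 < l) (hl' : l ≤ 1) (hm : 0 < m) :
    InjOn (Phi l m) (Prod.snd ⁻¹' Ioi (1 / 8)) := by
  refine injOn_Phi_of_jacobian_ne_zero
    ((convex_Ioi _).linear_preimage (LinearMap.snd ℝ ℝ ℝ)) fun p hp ↦ ?_
  have h_eq : jacobian l m p = m * (l * (2 * (p.1 - p.2 - 1 / 4) ^ 2 + (p.2 - 1 / 8))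
      + 2 * (1 - l) * p.2 ^ 2) := by
    rw [jacobian]
    ring
  have : 0 < p.2 - 1 / 8 := sub_pos.2 hp
  have : 0 ≤ 1 - l := sub_nonneg.2 hl'
  rw [h_eq]
  positivity

theorem injOn_Phi_Icc_prod_Icc :
    InjOn (Phi 0.99 5) (Icc 0.3 0.4 ×ˢ Icc 0 0.02) := by
  refine injOn_Phi_of_jacobian_ne_zero ((convex_Icc _ _).prod (convex_Icc _ _)) ?_
  rintro p ⟨⟨hx, hx'⟩, hy, hy'⟩
  refine ne_of_lt ?_
  rw [jacobian]
  norm_num at hx hx' hy hy' ⊢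
  nlinarith

end Map

section Itinerary

/-- Ten parallelograms found numerically around two segments of pseudo-orbits of `Phi 0.99 5` of
length five, one for each symbol: `frame a r` is stretched across `frame a (r + 1)` for `r < 4`, and
`frame a 4` across both `frame false 0` and `frame true 0`. Indices beyond `4` are not used. -/
def frame : Bool → ℕ → Frame
  | false, 0 =>
    { center := (0.6448, 0.6422), unstable := (-0.000435, 0.00058), stable := (0.0311, 0.0311) }
  | false, 1 =>
    { center := (0.3592, 0.0081), unstable := (0.0001813, 0.00259), stable := (0.0315, -0.00063) }
  | false, 2 =>
    { center := (0.7694, 0.0143), unstable := (-0.0007062, 0.00321), stable := (0.011, -0.00044) }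
  | false, 3 =>
    { center := (0.8133, 0.054), unstable := (-0.00264, 0.011), stable := (0.00634, -0.0006974) }
  | false, _ =>
    { center := (0.8058, 0.2049), unstable := (-0.009504, 0.0352), stable := (0.0048, -0.000768) }
  | true, 0 =>
    { center := (0.6959, 0.5528), unstable := (-0.0042864, 0.00912), stable := (0.0201, 0.043818) }
  | true, 1 =>
    { center := (0.4057, 0.3949), unstable := (0.001349, 0.0071), stable := (0.0375, 0.0375) }
  | true, 2 =>
    { center := (0.6011, 0.0214), unstable := (0.0026862, 0.00814), stable := (0.0379, -0.001895) }
  | true, 3 =>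
    { center := (0.7499, 0.062), unstable := (-0.003534, 0.0186), stable := (0.0116, -0.00174) }
  | true, _ =>
    { center := (0.7678, 0.2126), unstable := (-0.013122, 0.0486), stable := (0.00779, -0.0018696) }

theorem stretches_transition_frame (a b : Bool) : ∀ r < 5,
    let P := (phiQuad 0.99 5).transition (frame a r) (frame (if r = 4 then b else a) ((r + 1) % 5))
    Stretches 0.999 P.fst P.snd := by
  revert a b
  decide +kernel

theorem half_lt_fst_of_mem_region (a : Bool) {r : ℕ} (hr : r < 5) (hr' : r ≠ 1) {p : ℝ × ℝ}
    (hp : p ∈ (frame a r).region) : 1 / 2 < p.1 := by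
  have h_frame : ∀ a, ∀ r < 5, r ≠ 1 →
      |(frame a r).unstable.1| + |(frame a r).stable.1| < (frame a r).center.1 - 1 / 2 := by
    decide +kernel
  have h_lt := (Rat.cast_lt (K := ℝ)).2 (h_frame a r hr hr')
  push_cast at h_lt
  linarith [(abs_le.1 ((frame a r).abs_fst_sub_center_le hp)).1]

theorem injOn_Phi_region (a : Bool) {r : ℕ} (hr : r < 5) :
    InjOn (Phi 0.99 5) (frame a r).region := by
  obtain rfl | hr' := eq_or_ne r 1
  · cases a
    · refine injOn_Phi_Icc_prod_Icc.mono fun p hp ↦ ?_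
      have h1 := (frame false 1).abs_fst_sub_center_le hp
      have h2 := (frame false 1).abs_snd_sub_center_le hp
      norm_num [frame, abs_le] at h1 h2
      norm_num
      constructor <;> constructor <;> linarith
    · refine (injOn_Phi_eighth_lt_snd (by norm_num) (by norm_num) (by norm_num)).mono fun p hp ↦ ?_
      have h2 := (frame true 1).abs_snd_sub_center_le hp
      norm_num [frame, abs_le] at h2
      norm_num
      linarith
  · exact (injOn_Phi_half_lt_fst (by norm_num) (by norm_num) (by norm_num)).mono fun p hp ↦
      half_lt_fst_of_mem_region a hr hr' hp

theorem injOn_Phi_iUnion_region {r : ℕ} (hr : r < 5) (hr' : r ≠ 1) :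
    InjOn (Phi 0.99 5) (⋃ a, (frame a r).region) :=
  (injOn_Phi_half_lt_fst (by norm_num) (by norm_num) (by norm_num)).mono <|
    iUnion_subset fun a _ hp ↦ half_lt_fst_of_mem_region a hr hr' hp

theorem eq_of_mem_region_two {a b : Bool} {p : ℝ × ℝ} (ha : p ∈ (frame a 2).region)
    (hb : p ∈ (frame b 2).region) : a = b := by
  have h_false (hp : p ∈ (frame false 2).region) : 0.7 < p.1 := by
    have h := (frame false 2).abs_fst_sub_center_le hp
    norm_num [frame, abs_le] at h
    norm_num
    linarith
  have h_true (hp : p ∈ (frame true 2).region) : p.1 < 0.7 := by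
    have h := (frame true 2).abs_fst_sub_center_le hp
    norm_num [frame, abs_le] at h
    norm_num
    linarith
  cases a <;> cases b
  · rfl
  · exact absurd (h_false ha) (h_true hb).not_gt
  · exact absurd (h_false hb) (h_true ha).not_gt
  · rfl

/-- The points whose first five iterates follow the parallelograms of the symbol `a`. -/
def block (a : Bool) : Set (ℝ × ℝ) :=
  {p | ∀ r < 5, (Phi 0.99 5)^[r] p ∈ (frame a r).region}

theorem isCompact_block (a : Bool) : IsCompact (block a) := by
  have h_closed : IsClosed (block a) := by
    simp only [block, ofPred_forall]
    exact isClosed_iInter fun r ↦ isClosed_iInter fun _ ↦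
      (frame a r).isCompact_region.isClosed.preimage ((continuous_Phi _ _).iterate r)
  exact (frame a 0).isCompact_region.of_isClosed_subset h_closed fun p hp ↦ hp 0 (by norm_num)

theorem existsUnique_isOrbitIn_block (s : ℤ → Bool) :
    ∃! x, IsOrbitIn (fun _ ↦ (Phi 0.99 5)^[5]) (fun n ↦ block (s n)) x := by
  have h_Phi : (phiQuad 0.99 5).eval = Phi 0.99 5 := by
    rw [eval_phiQuad]
    norm_num
  have h_stretches (n : ℤ) :
      let P := (phiQuad 0.99 5).transition (frame (s (n / (5 : ℕ))) (n % (5 : ℕ)).toNat)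
        (frame (s ((n + 1) / (5 : ℕ))) ((n + 1) % (5 : ℕ)).toNat)
      Stretches 0.999 P.fst P.snd := by
    have h_symbol : s ((n + 1) / (5 : ℕ)) =
        if (n % (5 : ℕ)).toNat = 4 then s (n / (5 : ℕ) + 1) else s (n / (5 : ℕ)) := by
      split_ifs <;> exact congrArg s (by lia)
    have h_index : ((n + 1) % (5 : ℕ)).toNat = ((n % (5 : ℕ)).toNat + 1) % 5 := by lia
    rw [h_symbol, h_index]
    exact stretches_transition_frame _ _ _ (by lia)
  have h_orbit := QuadMap.existsUnique_isOrbitIn_region (by decide +kernel) _ _ h_stretches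
  rw [h_Phi] at h_orbit
  exact existsUnique_isOrbitIn_iterate (M := fun q r ↦ (frame (s q) r).region) (by norm_num) h_orbit

theorem injOn_Phi_iterate_iUnion_block : InjOn (Phi 0.99 5)^[5] (⋃ a, block a) := by
  intro p hp q hq hpq
  obtain ⟨a, ha⟩ := mem_iUnion.1 hp
  obtain ⟨b, hb⟩ := mem_iUnion.1 hq
  have h_two : (Phi 0.99 5)^[2] p = (Phi 0.99 5)^[2] q := by
    refine injOn_iterate (k := 3) (N := fun r ↦ ⋃ c, (frame c (r + 2)).region)
      (fun r hr ↦ injOn_Phi_iUnion_region (by lia) (by lia)) (fun r hr ↦ ?_) (fun r hr ↦ ?_) ?_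
    · rw [← iterate_add_apply]
      exact mem_iUnion_of_mem a (ha _ (by lia))
    · rw [← iterate_add_apply]
      exact mem_iUnion_of_mem b (hb _ (by lia))
    · exact hpq
  obtain rfl : a = b := eq_of_mem_region_two (ha 2 (by norm_num)) (h_two ▸ hb 2 (by norm_num))
  exact injOn_iterate (fun r hr ↦ injOn_Phi_region a (by lia)) (fun r hr ↦ ha r (by lia))
    (fun r hr ↦ hb r (by lia)) h_two

theorem isHorseshoe_block : IsHorseshoe (Phi 0.99 5)^[5] block where
  isCompact := isCompact_block
  pairwise_disjoint a b hab := disjoint_left.2 fun _ ha hb ↦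
    hab <| eq_of_mem_region_two (ha 2 (by norm_num)) (hb 2 (by norm_num))
  injOn := injOn_Phi_iterate_iUnion_block
  existsUnique_isOrbitIn := existsUnique_isOrbitIn_block

end Itinerary

end FlipFlop

/-- For Φ = Φ_{0.99,5}: there are N ∈ ℕ and a nonempty compact set Λ invariant under
H = Φ^(N+2), and a homeomorphism e : Λ ≃ {0,1}^ℤ conjugating H|_Λ to the shift map.
Consequently H|_Λ has a dense orbit and Φ has periodic points of arbitrarily large
minimal period. -/
theorem stmt_19 :
    ∃ (N : ℕ) (Λ : Set (ℝ × ℝ))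
      (hmap : Set.MapsTo ((Phi 0.99 5)^[N + 2]) Λ Λ),
      Λ.Nonempty ∧ IsCompact Λ ∧
      (Phi 0.99 5)^[N + 2] '' Λ = Λ ∧
      (∃ e : Λ ≃ₜ (ℤ → Bool),
        ∀ p : Λ, e ⟨(Phi 0.99 5)^[N + 2] p.1, hmap p.2⟩ = shiftMap (e p)) ∧
      (∃ p ∈ Λ, ∀ q ∈ Λ, ∀ ε > (0 : ℝ), ∃ n : ℕ,
        dist (((Phi 0.99 5)^[N + 2])^[n] p) q < ε) ∧
      (∀ m : ℕ, ∃ p : ℝ × ℝ, ∃ k : ℕ, m ≤ k ∧ (Phi 0.99 5)^[k] p = p ∧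
        ∀ j : ℕ, 0 < j → j < k → (Phi 0.99 5)^[j] p ≠ p) := by
  have h_horseshoe := FlipFlop.isHorseshoe_block
  have h_cont : Continuous h_horseshoe.code :=
    h_horseshoe.continuous_code ((FlipFlop.continuous_Phi _ _).iterate 5)
  have h_inj : Injective h_horseshoe.code := h_horseshoe.injective_code
  have h_semiconj : Semiconj h_horseshoe.code shiftMap (Phi 0.99 5)^[3 + 2] :=
    h_horseshoe.semiconj_code
  have h_surjOn := h_semiconj.surjOn_range FlipFlop.surjective_shiftMap
  have h_mapsTo := h_semiconj.mapsTo_range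
  refine ⟨3, range h_horseshoe.code, h_mapsTo, range_nonempty _, isCompact_range h_cont,
    h_surjOn.image_eq_of_mapsTo h_mapsTo,
    ⟨(h_cont.isClosedEmbedding h_inj).isEmbedding.toHomeomorph.symm, ?_⟩, ?_, fun m ↦ ?_⟩
  · rintro ⟨_, s, rfl⟩
    simp only [Topology.IsEmbedding.toHomeomorph_symm_apply]
    exact (Homeomorph.symm_apply_eq _).2 (Subtype.ext (h_semiconj s).symm)
  · obtain ⟨u, hu⟩ := FlipFlop.exists_denseRange_shift Bool
    refine ⟨h_horseshoe.code u, mem_range_self u, ?_⟩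
    rintro _ ⟨s, rfl⟩ ε hε
    obtain ⟨n, hn⟩ := hu.exists_mem_open (isOpen_ball.preimage h_cont) ⟨s, mem_ball_self hε⟩
    rw [← FlipFlop.shiftMap_iterate, mem_preimage, (h_semiconj.iterate_right n).eq] at hn
    exact ⟨n, hn⟩
  · obtain ⟨p, hp⟩ := FlipFlop.exists_le_minimalPeriod_of_semiconj_shiftMap
      (k := 5) (by norm_num) h_inj h_semiconj m
    exact ⟨p, _, hp, iterate_minimalPeriod, fun j hj hj' ↦
      not_isPeriodicPt_of_pos_of_lt_minimalPeriod hj.ne' hj'⟩
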